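/- For every integer d ≥ 2, there exists a real number ε > 0 as follows: if G is a finite graph of maximum average degree at most d and choosability at most d−1, then G with any list assignment in which every list has size at least d is ε-flexible. -/

import Mathlib

def IsLColoring {V : Type*} (G : SimpleGraph V) (L : V → Finset ℕ) (φ : V → ℕ) : Prop :=
  (∀ v, φ v ∈ L v) ∧ ∀ ⦃u w : V⦄, G.Adj u w → φ u ≠ φ w

def EpsSat {V : Type*} (G : SimpleGraph V) (L : V → Finset ℕ) (D : Finset V)
    (r : V → ℕ) (ε : ℝ) : Prop :=
  ∃ φ : V → ℕ, IsLColoring G L φ ∧ ε * D.card ≤ ((D.filter fun v => φ v = r v).card : ℝ)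

def Flexible {V : Type*} (G : SimpleGraph V) (L : V → Finset ℕ) (ε : ℝ) : Prop :=
  ∀ (D : Finset V) (r : V → ℕ), (∀ v ∈ D, r v ∈ L v) → EpsSat G L D r ε

/-- The maximum average degree of `G` is at most `x`: every non-null subgraph `H`
satisfies `2|E(H)| ≤ x·|V(H)|`. -/
def MadLE {V : Type*} (G : SimpleGraph V) (x : ℝ) : Prop :=
  ∀ H : G.Subgraph, H.verts.Nonempty → 2 * (H.edgeSet.ncard : ℝ) ≤ x * H.verts.ncard

/-- The choosability of `G` is at most `k`. -/
def Choosable {V : Type*} (G : SimpleGraph V) (k : ℕ) : Prop :=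
  ∀ L : V → Finset ℕ, (∀ v, k ≤ (L v).card) → ∃ φ, IsLColoring G L φ

open Finset in
theorem count_aux {V : Type} [Fintype V] [DecidableEq V] (d : ℕ) (hd : 2 ≤ d)
    (L : V → Finset ℕ) (hL : ∀ v, (L v).card = d) (N : Finset V) (v : V) (hv : v ∉ N)
    (hN : N.card ≤ 2 * d) (c : ℕ) :
    (Fintype.piFinset L).card ≤ d ^ (2 * d + 1) *
      ((Fintype.piFinset L).filter
        (fun f => f v ≠ c ∧ ∀ u ∈ N, c ∈ L u → f u = c)).card := by
  classical
  set L' : V → Finset ℕ := fun u =>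
    if u = v then (L v).erase c else if u ∈ N ∧ c ∈ L u then {c} else L u with hL'
  have hsub : Fintype.piFinset L' ⊆ (Fintype.piFinset L).filter
        (fun f => f v ≠ c ∧ ∀ u ∈ N, c ∈ L u → f u = c) := by
    intro f hf
    rw [Fintype.mem_piFinset] at hf
    rw [Finset.mem_filter, Fintype.mem_piFinset]
    refine ⟨fun u => ?_, ?_, fun u hu hc => ?_⟩
    · have := hf u
      simp only [hL'] at this
      split_ifs at this with h1 h2
      · subst h1; exact Finset.mem_of_mem_erase this
      · rw [Finset.mem_singleton] at this; rw [this]; exact h2.2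
      · exact this
    · have := hf v
      simp only [hL', if_true] at this
      exact Finset.ne_of_mem_erase this
    · have := hf u
      have huv : u ≠ v := fun h => hv (h ▸ hu)
      simpa [hL', huv, hu, hc] using this
  refine le_trans ?_ (Nat.mul_le_mul_left _ (Finset.card_le_card hsub))
  rw [Fintype.card_piFinset, Fintype.card_piFinset]
  have h1 : ∏ u : V, (L u).card ≤
      ∏ u : V, ((if u ∈ insert v N then d else 1) * (L' u).card) := by
    apply Finset.prod_le_prod'
    intro u _
    rw [hL u]
    by_cases hu : u = v
    · subst hu
      have : 1 ≤ (L' u).card := by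
        simp only [hL', if_true]
        have := Finset.pred_card_le_card_erase (s := L u) (a := c)
        rw [hL u] at this; omega
      simp only [Finset.mem_insert_self, if_true]
      exact Nat.le_mul_of_pos_right _ this
    · by_cases hu2 : u ∈ N
      · have : 1 ≤ (L' u).card := by
          simp only [hL', if_neg hu]
          split_ifs
          · simp
          · rw [hL u]; omega
        simp only [Finset.mem_insert, hu2, or_true, if_true]
        exact Nat.le_mul_of_pos_right _ this
      · simp [hL', hu, hu2, hL u]
  refine h1.trans ?_
  rw [Finset.prod_mul_distrib]
  apply Nat.mul_le_mul_right
  rw [Finset.prod_ite, Finset.prod_const, Finset.prod_const_one, mul_one]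
  apply Nat.pow_le_pow_right (by omega)
  have : (Finset.univ.filter (fun x => x ∈ insert v N)) = insert v N := by ext; simp
  rw [this]
  exact (Finset.card_insert_le _ _).trans (by omega)

open Finset in
theorem core_aux {V : Type} [Fintype V] [DecidableEq V] (d : ℕ)
    (G : SimpleGraph V) [DecidableRel G.Adj] (L : V → Finset ℕ)
    (hL : ∀ v, (L v).card = d) (D : Finset V) :
    ∃ S : Finset V, D ⊆ S ∧
      (∀ ψ : V → ℕ, (∀ v ∈ S, ψ v ∈ L v) → (∀ u ∈ S, ∀ w ∈ S, G.Adj u w → ψ u ≠ ψ w) →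
        ∃ φ, IsLColoring G L φ ∧ ∀ v ∈ S, φ v = ψ v) ∧
      ∀ t ∈ S, t ∉ D → d ≤ (S.filter (fun u => G.Adj t u)).card := by
  classical
  let P : Finset V → Prop := fun S => D ⊆ S ∧
      (∀ ψ : V → ℕ, (∀ v ∈ S, ψ v ∈ L v) → (∀ u ∈ S, ∀ w ∈ S, G.Adj u w → ψ u ≠ ψ w) →
        ∃ φ, IsLColoring G L φ ∧ ∀ v ∈ S, φ v = ψ v)
  have hex : ∃ n, ∃ S, P S ∧ S.card = n :=
    ⟨_, Finset.univ, ⟨Finset.subset_univ _, fun ψ h1 h2 =>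
      ⟨ψ, ⟨fun v => h1 v (Finset.mem_univ _),
        fun u w h => h2 u (Finset.mem_univ _) w (Finset.mem_univ _) h⟩, fun _ _ => rfl⟩⟩, rfl⟩
  obtain ⟨S, hS, hcard⟩ := Nat.find_spec hex
  refine ⟨S, hS.1, hS.2, fun t ht htD => ?_⟩
  by_contra hlt
  push Not at hlt
  have hP : P (S.erase t) := by
    refine ⟨fun x hx => Finset.mem_erase.2 ⟨fun h => htD (h ▸ hx), hS.1 hx⟩, ?_⟩
    intro ψ h1 h2
    have : ∃ c ∈ L t, c ∉ (S.filter (fun u => G.Adj t u)).image ψ := by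
      apply Finset.exists_mem_notMem_of_card_lt_card
      rw [hL t]
      exact lt_of_le_of_lt Finset.card_image_le hlt
    obtain ⟨c, hc, hc'⟩ := this
    have hc'' : ∀ u ∈ S, G.Adj t u → ψ u ≠ c := by
      intro u hu ha h
      exact hc' (Finset.mem_image.2 ⟨u, Finset.mem_filter.2 ⟨hu, ha⟩, h⟩)
    obtain ⟨φ, hφ, hφ'⟩ := hS.2 (Function.update ψ t c) (by
      intro v hv
      by_cases h : v = t
      · subst h; simpa using hc
      · simpa [h] using h1 v (Finset.mem_erase.2 ⟨h, hv⟩)) (by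
      intro u hu w hw ha
      by_cases h : u = t
      · subst h
        have hw' : w ≠ u := ha.ne'
        simpa [hw'] using (hc'' w hw ha).symm
      · by_cases h' : w = t
        · subst h'
          simpa [h] using hc'' u hu ha.symm
        · simpa [h, h'] using h2 u (Finset.mem_erase.2 ⟨h, hu⟩) w (Finset.mem_erase.2 ⟨h', hw⟩) ha)
    refine ⟨φ, hφ, fun v hv => ?_⟩
    rw [Finset.mem_erase] at hv
    rw [hφ' v hv.2]; simp [hv.1]
  refine Nat.find_min hex (m := (S.erase t).card) ?_ ⟨_, hP, rfl⟩
  rw [← hcard]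
  exact Finset.card_erase_lt_of_mem ht

open Finset in
theorem mad_aux {V : Type} [Fintype V] [DecidableEq V] (d : ℕ)
    (G : SimpleGraph V) [DecidableRel G.Adj] (hG : MadLE G d) (S : Finset V) :
    ∑ v ∈ S, (S.filter (fun u => G.Adj v u)).card ≤ d * S.card := by
  classical
  rcases S.eq_empty_or_nonempty with rfl | hne
  · simp
  let H : G.Subgraph := (⊤ : G.Subgraph).induce (S : Set V)
  have h := hG H (by simpa [H] using hne)
  have hv : H.verts.ncard = S.card := by simp [H]
  let K := H.spanningCoe
  have hK : ∀ u v, K.Adj u v ↔ u ∈ S ∧ v ∈ S ∧ G.Adj u v := by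
    intro u v; simp [K, H]
  have he : H.edgeSet.ncard = K.edgeFinset.card := by
    rw [← Set.ncard_coe_finset, SimpleGraph.coe_edgeFinset]
    simp [K]
  rw [hv, he] at h
  have h' : 2 * K.edgeFinset.card ≤ d * S.card := by exact_mod_cast h
  rw [← K.sum_degrees_eq_twice_card_edges] at h'
  refine le_trans ?_ h'
  refine le_trans (Finset.sum_le_sum (g := fun v => K.degree v) ?_)
    (Finset.sum_le_sum_of_subset (Finset.subset_univ S))
  intro v hvS
  rw [← K.card_neighborFinset_eq_degree]
  apply Finset.card_le_card
  intro u hu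
  rw [Finset.mem_filter] at hu
  rw [SimpleGraph.mem_neighborFinset, hK]
  exact ⟨hvS, hu.1, hu.2⟩

open Finset in
theorem main_aux {V : Type} [Fintype V] (d : ℕ) (hd : 2 ≤ d)
    (G : SimpleGraph V) (L : V → Finset ℕ) (hG : MadLE G d) (hch : Choosable G (d - 1))
    (hL : ∀ v, (L v).card = d) (D : Finset V) (r : V → ℕ) (hr : ∀ v ∈ D, r v ∈ L v) :
    ∃ φ : V → ℕ, IsLColoring G L φ ∧
      D.card ≤ 2 * d ^ (2 * d + 1) * (D.filter fun v => φ v = r v).card := by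
  classical
  obtain ⟨S, hDS, hext, hdeg⟩ := core_aux d G L hL D
  have hmad := mad_aux d G hG S
  set N : V → Finset V := fun v => S.filter (fun u => G.Adj v u) with hN
  have hsumD : ∑ v ∈ D, (N v).card ≤ d * D.card := by
    rw [← Finset.sum_sdiff hDS] at hmad
    have h1 : (S \ D).card * d ≤ ∑ v ∈ S \ D, (N v).card := by
      rw [← smul_eq_mul]
      apply Finset.card_nsmul_le_sum
      intro v hv
      rw [Finset.mem_sdiff] at hv
      exact hdeg v hv.1 hv.2
    have h2 := Finset.card_sdiff_add_card_eq_card hDS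
    rw [← h2] at hmad
    simp only [hN] at h1 ⊢
    nlinarith
  set D' := D.filter (fun v => (N v).card ≤ 2 * d) with hD'
  have hD2 : D.card ≤ 2 * D'.card := by
    have h1 := Finset.card_filter_add_card_filter_not (s := D) (fun v => (N v).card ≤ 2 * d)
    have h2 : (D.filter (fun v => ¬ (N v).card ≤ 2 * d)).card * (2 * d + 1) ≤
        ∑ v ∈ D, (N v).card := by
      refine le_trans ?_ (Finset.sum_le_sum_of_subset
        (Finset.filter_subset (fun v => ¬ (N v).card ≤ 2 * d) D))
      rw [← smul_eq_mul]
      apply Finset.card_nsmul_le_sum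
      intro v hv
      have := (Finset.mem_filter.1 hv).2
      omega
    rw [← hD'] at h1
    by_contra hcon
    push Not at hcon
    have h3 : D.card + 1 ≤ 2 * (D.filter (fun v => ¬ (N v).card ≤ 2 * d)).card := by omega
    nlinarith
  -- averaging
  let good : (V → ℕ) → V → Prop := fun f v => f v ≠ r v ∧ ∀ u ∈ N v, r v ∈ L u → f u = r v
  obtain ⟨f, hf, hfgood⟩ : ∃ f ∈ Fintype.piFinset L,
      D'.card ≤ d ^ (2 * d + 1) * (D'.filter (good f)).card := by
    apply Finset.exists_le_of_sum_le
    · refine ⟨fun v => (L v).min' (Finset.card_pos.1 (by rw [hL]; omega)), ?_⟩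
      rw [Fintype.mem_piFinset]
      intro v; exact Finset.min'_mem _ _
    rw [← Finset.mul_sum]
    simp only [Finset.card_filter]
    rw [Finset.sum_comm]
    rw [Finset.mul_sum, Finset.sum_const, smul_eq_mul, mul_comm, ← smul_eq_mul]
    apply Finset.card_nsmul_le_sum
    intro v hv
    have h := count_aux d hd L hL (N v) v (by simp [hN]) (Finset.mem_filter.1 hv).2 (r v)
    rw [Finset.card_filter] at h
    convert h
  rw [Fintype.mem_piFinset] at hf
  obtain ⟨φ, hφ1, hφ2⟩ := hch (fun v => (L v).erase (f v)) (by
    intro v; rw [Finset.card_erase_of_mem (hf v), hL])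
  have hφL : ∀ v, φ v ∈ L v := fun v => Finset.mem_of_mem_erase (hφ1 v)
  have hφf : ∀ v, φ v ≠ f v := fun v => Finset.ne_of_mem_erase (hφ1 v)
  have key : ∀ v, good f v → ∀ u ∈ S, G.Adj v u → φ u ≠ r v := by
    intro v hv u hu ha h
    have := hv.2 u (Finset.mem_filter.2 ⟨hu, ha⟩) (h ▸ hφL u)
    exact hφf u (h.trans this.symm)
  obtain ⟨χ, hχ, hχ'⟩ := hext (fun v => if v ∈ D' ∧ good f v then r v else φ v) (by
    intro v _
    split_ifs with h
    · exact hr v (Finset.mem_filter.1 h.1).1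
    · exact hφL v) (by
    intro u hu w hw ha
    split_ifs with h1 h2 h2
    · intro h
      have hw' := hr w (Finset.mem_filter.1 h2.1).1
      have := h1.2.2 w (Finset.mem_filter.2 ⟨hw, ha⟩) (h ▸ hw')
      exact h2.2.1 (this.trans h)
    · exact (key u h1.2 w hw ha).symm
    · exact key w h2.2 u hu ha.symm
    · exact hφ2 ha)
  refine ⟨χ, hχ, ?_⟩
  have hsub : (D'.filter (good f)) ⊆ (D.filter fun v => χ v = r v) := by
    intro v hv
    rw [Finset.mem_filter] at hv
    have hvD := (Finset.mem_filter.1 hv.1).1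
    rw [Finset.mem_filter]
    refine ⟨hvD, ?_⟩
    rw [hχ' v (hDS hvD), if_pos hv]
  calc D.card ≤ 2 * D'.card := hD2
    _ ≤ 2 * (d ^ (2 * d + 1) * (D'.filter (good f)).card) := by omega
    _ ≤ 2 * (d ^ (2 * d + 1) * (D.filter fun v => χ v = r v).card) := by
      gcongr
    _ = _ := by ring

theorem stmt3 (d : ℕ) (hd : 2 ≤ d) :
    ∃ ε : ℝ, 0 < ε ∧
      ∀ (V : Type) [Fintype V] (G : SimpleGraph V) (L : V → Finset ℕ),
        MadLE G d → Choosable G (d - 1) → (∀ v, d ≤ (L v).card) → Flexible G L ε := by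
  have hpos : (0 : ℝ) < 2 * (d : ℝ) ^ (2 * d + 1) := by
    have : (0 : ℝ) < d := by exact_mod_cast (by omega : 0 < d)
    positivity
  refine ⟨1 / (2 * (d : ℝ) ^ (2 * d + 1)), by positivity, ?_⟩
  intro V _ G L hG hch hL D r hr
  classical
  have hex : ∀ v, ∃ M : Finset ℕ, M ⊆ L v ∧ M.card = d ∧ (v ∈ D → r v ∈ M) := by
    intro v
    by_cases hv : v ∈ D
    · obtain ⟨M, h1, h2, h3⟩ := Finset.exists_subsuperset_card_eq (s := {r v}) (t := L v) (n := d)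
        (by simpa using hr v hv) (by simp; omega) (hL v)
      exact ⟨M, h2, h3, fun _ => h1 (by simp)⟩
    · obtain ⟨M, h1, h2⟩ := Finset.exists_subset_card_eq (hL v)
      exact ⟨M, h1, h2, fun h => absurd h hv⟩
  choose M hM1 hM2 hM3 using hex
  obtain ⟨φ, hφ, hc⟩ := main_aux d hd G M hG hch hM2 D r hM3
  refine ⟨φ, ⟨fun v => hM1 v (hφ.1 v), hφ.2⟩, ?_⟩
  rw [one_div, inv_mul_le_iff₀ hpos]
  have hc' : (D.card : ℝ) ≤ ((2 * d ^ (2 * d + 1) * (D.filter fun v => φ v = r v).card : ℕ) : ℝ) :=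
    Nat.cast_le.2 hc
  push_cast at hc'
  convert hc'
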